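/- arXiv:1511.06230 — 6 statements merged into one kernel-verified Lean document; each statement's English description precedes it below -/
import Mathlib

section
/- For every 1 ≤ i ≤ ν/2 and any two elements x > y of S^0 ∪ S^1 ∪ ⋯ ∪ S^i, one has x − y ≥ s^{ν−2i+1}. -/
/-- The set `S^i` of the description of the Weierstrass semigroup `H(Q_ν)` of the
ν-th function field of the Garcia–Stichtenoth tower over `𝔽_q`, `q = s^2`. -/
def Sset (s ν i : ℕ) : Set ℕ :=
  if i = 0 then {0}
  else {x | ∃ k, 1 ≤ k ∧ k ≤ s ^ i - s ^ (i - 1) ∧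
        x = s ^ ν - s ^ (ν - i + 1) + k * s ^ (ν - 2 * i + 1)}

theorem pow_dvd_of_mem_Sset {s ν r z : ℕ} (hr : 2 * r ≤ ν) (hz : z ∈ Sset s ν r) :
    s ^ (ν - 2 * r + 1) ∣ z := by
  unfold Sset at hz
  split_ifs at hz with hr0
  · obtain rfl : z = 0 := hz
    exact dvd_zero _
  · obtain ⟨k, -, -, rfl⟩ := hz
    have hν : s ^ (ν - 2 * r + 1) ∣ s ^ ν := pow_dvd_pow s (by lia)
    have hνr : s ^ (ν - 2 * r + 1) ∣ s ^ (ν - r + 1) := pow_dvd_pow s (by lia)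
    exact (Nat.dvd_sub hν hνr).add (dvd_mul_left _ k)

theorem pow_dvd_of_mem_iUnion_Sset {s ν i z : ℕ} (hi : 2 * i ≤ ν)
    (hz : z ∈ ⋃ r ≤ i, Sset s ν r) : s ^ (ν - 2 * i + 1) ∣ z := by
  obtain ⟨r, hri, hzr⟩ := Set.mem_iUnion₂.mp hz
  calc
    s ^ (ν - 2 * i + 1) ∣ s ^ (ν - 2 * r + 1) := pow_dvd_pow s (by lia)
    _ ∣ z := pow_dvd_of_mem_Sset (by lia) hzr

theorem stmt4_general {s ν i x y : ℕ} (hi : 2 * i ≤ ν) (hx : x ∈ ⋃ r ≤ i, Sset s ν r)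
    (hy : y ∈ ⋃ r ≤ i, Sset s ν r) (hxy : y < x) : s ^ (ν - 2 * i + 1) ≤ x - y :=
  have hdvd : s ^ (ν - 2 * i + 1) ∣ x - y :=
    Nat.dvd_sub (pow_dvd_of_mem_iUnion_Sset hi hx) (pow_dvd_of_mem_iUnion_Sset hi hy)
  Nat.le_of_dvd (Nat.sub_pos_of_lt hxy) hdvd

/-- For `1 ≤ i ≤ ν/2` and any `x > y` in `S^0 ∪ S^1 ∪ ⋯ ∪ S^i`, one has
`x - y ≥ s^(ν - 2i + 1)`. -/
theorem stmt4 (s ν : ℕ) (hs : 2 ≤ s) (hν : Even ν) (hν0 : 0 < ν)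
    (i : ℕ) (hi1 : 1 ≤ i) (hi2 : i ≤ ν / 2)
    (x y : ℕ) (hx : x ∈ ⋃ r ≤ i, Sset s ν r) (hy : y ∈ ⋃ r ≤ i, Sset s ν r)
    (hxy : y < x) :
    s ^ (ν - 2 * i + 1) ≤ x - y :=
  stmt4_general (by lia) hx hy hxy
end

section
/- The number of gaps of H equals (s^{ν/2} − 1)²; that is, #(ℕ \ H) = (s^{ν/2} − 1)², which is the genus g_ν of the ν-th function field of the Garcia–Stichtenoth tower when ν is even. -/
/-- The set `S^∞ = {n : n ≥ c + 1}` where `c = s^ν - s^(ν/2)` is the conductor. -/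
def Sinf (s ν : ℕ) : Set ℕ := {n | s ^ ν - s ^ (ν / 2) + 1 ≤ n}

/-- The Weierstrass semigroup `H = S^0 ∪ S^1 ∪ ⋯ ∪ S^(ν/2) ∪ S^∞ ⊆ ℕ`. -/
def Hsemi (s ν : ℕ) : Set ℕ := (⋃ i ≤ ν / 2, Sset s ν i) ∪ Sinf s ν

/-!
Put `e j = s ^ ν - s ^ (ν - j)`. For `2 * (j + 1) ≤ ν`, the set `S^(j+1)` is an arithmetic
progression of `s ^ (j + 1) - s ^ j` terms in the interval `(e j, e (j + 1)]`, whose last term is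
`e (j + 1)`. These intervals are disjoint, so the cardinalities telescope and
`S^0 ∪ ⋯ ∪ S^j` has `s ^ j` elements, all of them at most `e j`. For `j = ν / 2` they lie in
`[0, c]`, and the gaps are the other `c + 1 - s ^ (ν / 2)` elements of this interval.
-/

theorem sq_add_one_sub_two_mul {a : ℕ} (ha : 0 < a) : a ^ 2 + 1 - 2 * a = (a - 1) ^ 2 := by
  obtain ⟨b, rfl⟩ := Nat.exists_eq_add_one.2 ha
  rw [Nat.add_sub_cancel]
  exact Nat.sub_eq_of_eq_add (by ring)

theorem Sset_zero (s ν : ℕ) : Sset s ν 0 = {0} := if_pos rfl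

section Progression

variable {s ν i : ℕ}

theorem Sset_succ (h : 2 * (i + 1) ≤ ν) :
    Sset s ν (i + 1) = (fun k ↦ s ^ ν - s ^ (ν - i) + k * s ^ (ν - (2 * i + 1))) ''
      Set.Icc 1 (s ^ (i + 1) - s ^ i) := by
  have hstart : ν - (i + 1) + 1 = ν - i := by omega
  have hstep : ν - 2 * (i + 1) + 1 = ν - (2 * i + 1) := by omega
  ext x
  simp [Sset, hstart, hstep, and_assoc, eq_comm]

theorem ncard_Sset_succ (hs : 0 < s) (h : 2 * (i + 1) ≤ ν) :
    (Sset s ν (i + 1)).ncard = s ^ (i + 1) - s ^ i := by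
  have hinj : Function.Injective
      fun k ↦ s ^ ν - s ^ (ν - i) + k * s ^ (ν - (2 * i + 1)) :=
    (add_right_injective _).comp (mul_left_injective₀ (pow_pos hs _).ne')
  rw [Sset_succ h, Set.ncard_image_of_injective _ hinj, Set.ncard_eq_toFinset_card']
  simp

theorem Sset_succ_subset_Ioc (hs : 0 < s) (h : 2 * (i + 1) ≤ ν) :
    Sset s ν (i + 1) ⊆ Set.Ioc (s ^ ν - s ^ (ν - i)) (s ^ ν - s ^ (ν - (i + 1))) := by
  rw [Sset_succ h]
  rintro _ ⟨k, ⟨hk_pos, hk_le⟩, rfl⟩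
  refine ⟨Nat.lt_add_of_pos_right (Nat.mul_pos hk_pos (pow_pos hs _)), ?_⟩
  have hmono : s ^ (ν - (i + 1)) ≤ s ^ (ν - i) := Nat.pow_le_pow_right hs (by omega)
  have htop : s ^ (ν - i) ≤ s ^ ν := Nat.pow_le_pow_right hs (Nat.sub_le _ _)
  calc s ^ ν - s ^ (ν - i) + k * s ^ (ν - (2 * i + 1))
      ≤ s ^ ν - s ^ (ν - i) + (s ^ (i + 1) - s ^ i) * s ^ (ν - (2 * i + 1)) := by gcongr
    _ = s ^ ν - s ^ (ν - i) + (s ^ (ν - i) - s ^ (ν - (i + 1))) := by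
      rw [Nat.sub_mul, ← pow_add, ← pow_add]
      congr 4 <;> omega
    _ = s ^ ν - s ^ (ν - (i + 1)) := Nat.sub_add_sub_cancel htop hmono

end Progression

section Accumulate

variable {s ν j : ℕ}

theorem accumulate_Sset_subset_Iic (hs : 0 < s) (h : 2 * j ≤ ν) :
    Set.accumulate (Sset s ν) j ⊆ Set.Iic (s ^ ν - s ^ (ν - j)) := by
  induction j with
  | zero => simp [Set.accumulate_def, Sset_zero]
  | succ j ih =>
    have hmono : s ^ ν - s ^ (ν - j) ≤ s ^ ν - s ^ (ν - (j + 1)) :=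
      Nat.sub_le_sub_left (Nat.pow_le_pow_right hs (by omega)) _
    rw [Set.accumulate_succ]
    exact Set.union_subset ((ih (by omega)).trans (Set.Iic_subset_Iic.2 hmono))
      ((Sset_succ_subset_Ioc hs h).trans Set.Ioc_subset_Iic_self)

theorem ncard_accumulate_Sset (hs : 0 < s) (h : 2 * j ≤ ν) :
    (Set.accumulate (Sset s ν) j).ncard = s ^ j := by
  induction j with
  | zero => simp [Set.accumulate_def, Sset_zero]
  | succ j ih =>
    have hj : 2 * j ≤ ν := by omega
    have hsub := accumulate_Sset_subset_Iic hs hj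
    have hnext := Sset_succ_subset_Ioc hs h
    have hdisj : Disjoint (Set.accumulate (Sset s ν) j) (Sset s ν (j + 1)) :=
      (Set.Iic_disjoint_Ioc le_rfl).mono hsub hnext
    rw [Set.accumulate_succ, Set.ncard_union_eq hdisj ((Set.finite_Iic _).subset hsub)
      ((Set.finite_Ioc _ _).subset hnext), ih hj, ncard_Sset_succ hs h]
    exact Nat.add_sub_of_le (Nat.pow_le_pow_right hs j.le_succ)

end Accumulate

theorem setOf_notMem_Hsemi (s ν : ℕ) :
    {n | n ∉ Hsemi s ν} =
      Set.Iic (s ^ ν - s ^ (ν / 2)) \ Set.accumulate (Sset s ν) (ν / 2) := by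
  ext n
  simp [Hsemi, Sinf, Set.accumulate_def, and_comm]

theorem stmt7_general {s : ℕ} (hs : 0 < s) (ν : ℕ) :
    {n | n ∉ Hsemi s ν}.ncard = s ^ ν + 1 - 2 * s ^ (ν / 2) := by
  have hhalf : 2 * (ν / 2) ≤ ν := Nat.mul_div_le ν 2
  have hsub : Set.accumulate (Sset s ν) (ν / 2) ⊆ Set.Iic (s ^ ν - s ^ (ν / 2)) :=
    (accumulate_Sset_subset_Iic hs hhalf).trans <| Set.Iic_subset_Iic.2 <|
      Nat.sub_le_sub_left (Nat.pow_le_pow_right hs (by omega)) _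
  have hle : s ^ (ν / 2) ≤ s ^ ν := Nat.pow_le_pow_right hs (Nat.div_le_self ν 2)
  rw [setOf_notMem_Hsemi, Set.ncard_sdiff hsub ((Set.finite_Iic _).subset hsub),
    ncard_accumulate_Sset hs hhalf, Set.ncard_eq_toFinset_card', Set.toFinset_Iic, Nat.card_Iic]
  omega

/-- The number of gaps of `H` equals `(s^(ν/2) - 1)^2`, the genus of the ν-th
function field of the Garcia–Stichtenoth tower for ν even. -/
theorem stmt7 (s ν : ℕ) (hs : 2 ≤ s) (hν : Even ν) (hν0 : 0 < ν) :
    {n : ℕ | n ∉ Hsemi s ν}.ncard = (s ^ (ν / 2) - 1) ^ 2 := by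
  have hs_pos : 0 < s := by omega
  rw [stmt7_general hs_pos, ← sq_add_one_sub_two_mul (pow_pos hs_pos _), ← pow_mul,
    Nat.div_mul_cancel hν.two_dvd]
end

section
/- Any gap between consecutive elements of H is at most s^{ν−1}: for every x ∈ H with x > 0 there exists y ∈ H with y < x and x − y ≤ s^{ν−1}. Moreover this bound is attained, since 0 and s^{ν−1} are consecutive elements of H. -/
/-!
Put `b i = s ^ ν - s ^ (ν - i)`. The block `S^(i+1)` is the arithmetic progression of step
`s ^ (ν - (2 * i + 1))` that starts one step after `b i` and ends exactly at `b (i + 1)`, and for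
even `ν` the last block ends at `b (ν / 2) = c`, right before `S^∞`. So consecutive elements of `H`
differ by one of these steps or by `1`, and the largest step is the first one, `s ^ (ν - 1)`, which
leads from `0` to the first element of `S^1`.
-/

/-- The largest element of the block `S^i` of the semigroup. For `i = 0` this is `0`, and for
`i = ν / 2` with `ν` even it is the conductor `c`. -/
def blockEnd (s ν i : ℕ) : ℕ := s ^ ν - s ^ (ν - i)

section

variable {s ν i k x : ℕ}

theorem blockEnd_zero : blockEnd s ν 0 = 0 := by
  simp [blockEnd]

theorem blockEnd_half (hν : Even ν) : blockEnd s ν (ν / 2) = s ^ ν - s ^ (ν / 2) := by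
  have half : ν - ν / 2 = ν / 2 := by grind
  rw [blockEnd, half]

theorem blockEnd_succ (hs : 0 < s) (hi : 2 * (i + 1) ≤ ν) :
    blockEnd s ν (i + 1) = blockEnd s ν i + (s ^ (i + 1) - s ^ i) * s ^ (ν - (2 * i + 1)) := by
  have length_mul_step :
      (s ^ (i + 1) - s ^ i) * s ^ (ν - (2 * i + 1)) = s ^ (ν - i) - s ^ (ν - (i + 1)) := by
    rw [Nat.sub_mul, ← pow_add, ← pow_add]
    congr 2 <;> omega
  have le_left : s ^ (ν - (i + 1)) ≤ s ^ (ν - i) := Nat.pow_le_pow_right hs (by omega)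
  have le_right : s ^ (ν - i) ≤ s ^ ν := Nat.pow_le_pow_right hs (by omega)
  rw [length_mul_step, blockEnd, blockEnd]
  omega

theorem mem_Sset_succ_iff (hi : 2 * (i + 1) ≤ ν) :
    x ∈ Sset s ν (i + 1) ↔ ∃ k, 1 ≤ k ∧ k ≤ s ^ (i + 1) - s ^ i ∧
      x = blockEnd s ν i + k * s ^ (ν - (2 * i + 1)) := by
  have start : ν - (i + 1) + 1 = ν - i := by omega
  have step : ν - 2 * (i + 1) + 1 = ν - (2 * i + 1) := by omega
  simp only [Sset, if_neg i.succ_ne_zero, Set.mem_ofPred_eq, add_tsub_cancel_right, start, step,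
    blockEnd]

theorem mem_Hsemi_iff :
    x ∈ Hsemi s ν ↔ x = 0 ∨ (∃ i, 2 * (i + 1) ≤ ν ∧ x ∈ Sset s ν (i + 1)) ∨
      s ^ ν - s ^ (ν / 2) < x := by
  simp only [Hsemi, Set.mem_union, Set.mem_iUnion, exists_prop, ← or_assoc]
  refine or_congr ⟨?_, ?_⟩ Iff.rfl
  · rintro ⟨_ | i, hi, hx⟩
    · exact .inl (by simpa [Sset] using hx)
    · exact .inr ⟨i, by omega, hx⟩
  · rintro (rfl | ⟨i, hi, hx⟩)
    · exact ⟨0, Nat.zero_le _, by simp [Sset]⟩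
    · exact ⟨i + 1, by omega, hx⟩

theorem zero_mem_Hsemi : 0 ∈ Hsemi s ν :=
  mem_Hsemi_iff.2 (.inl rfl)

theorem blockEnd_mem_Hsemi (hs : 2 ≤ s) (hi : 2 * i ≤ ν) : blockEnd s ν i ∈ Hsemi s ν := by
  obtain _ | i := i
  · simpa only [blockEnd_zero] using zero_mem_Hsemi
  · have block_nonempty : s ^ i < s ^ (i + 1) := Nat.pow_lt_pow_succ hs
    exact mem_Hsemi_iff.2 (.inr (.inl ⟨i, hi, (mem_Sset_succ_iff hi).2
      ⟨s ^ (i + 1) - s ^ i, by omega, le_rfl, blockEnd_succ (by omega) hi⟩⟩))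

theorem blockEnd_add_mul_mem_Hsemi (hs : 2 ≤ s) (hi : 2 * (i + 1) ≤ ν)
    (hk : k ≤ s ^ (i + 1) - s ^ i) :
    blockEnd s ν i + k * s ^ (ν - (2 * i + 1)) ∈ Hsemi s ν := by
  obtain rfl | k_pos := k.eq_zero_or_pos
  · simpa only [zero_mul, add_zero] using blockEnd_mem_Hsemi hs (by omega : 2 * i ≤ ν)
  · exact mem_Hsemi_iff.2 (.inr (.inl ⟨i, hi, (mem_Sset_succ_iff hi).2 ⟨k, k_pos, hk, rfl⟩⟩))

theorem mem_Hsemi_of_conductor_le (hs : 2 ≤ s) (hν : Even ν) (hx : s ^ ν - s ^ (ν / 2) ≤ x) :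
    x ∈ Hsemi s ν := by
  obtain rfl | conductor_lt := hx.eq_or_lt
  · rw [← blockEnd_half hν]
    exact blockEnd_mem_Hsemi hs (Nat.mul_div_le ν 2)
  · exact mem_Hsemi_iff.2 (.inr (.inr conductor_lt))

theorem exists_mem_Hsemi_lt_sub_le (hs : 2 ≤ s) (hν : Even ν) (hx : x ∈ Hsemi s ν)
    (x_pos : 0 < x) : ∃ y ∈ Hsemi s ν, y < x ∧ x - y ≤ s ^ (ν - 1) := by
  obtain rfl | ⟨i, hi, hx⟩ | hx := mem_Hsemi_iff.1 hx
  · exact absurd x_pos (lt_irrefl 0)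
  · obtain ⟨k, k_pos, hk, rfl⟩ := (mem_Sset_succ_iff hi).1 hx
    obtain ⟨k, rfl⟩ := Nat.exists_eq_add_of_le' k_pos
    have step_pos : 0 < s ^ (ν - (2 * i + 1)) := Nat.pow_pos (by omega)
    have step_le : s ^ (ν - (2 * i + 1)) ≤ s ^ (ν - 1) :=
      Nat.pow_le_pow_right (by omega) (by omega)
    refine ⟨_, blockEnd_add_mul_mem_Hsemi hs hi (by omega : k ≤ _), ?_, ?_⟩ <;>
      rw [add_one_mul] <;> omega
  · have one_le : 1 ≤ s ^ (ν - 1) := Nat.one_le_pow _ _ (by omega)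
    exact ⟨x - 1, mem_Hsemi_of_conductor_le hs hν (by omega), by omega, by omega⟩

theorem pow_pred_mem_Hsemi (hs : 2 ≤ s) (hν : 2 ≤ ν) : s ^ (ν - 1) ∈ Hsemi s ν := by
  have first_block_nonempty : 1 ≤ s ^ (0 + 1) - s ^ 0 := by
    rw [zero_add, pow_one, pow_zero]
    omega
  simpa only [blockEnd_zero, zero_add, mul_zero, one_mul] using
    blockEnd_add_mul_mem_Hsemi hs (by omega : 2 * (0 + 1) ≤ ν) first_block_nonempty

theorem pow_pred_le_pow_sub_pow (hs : 2 ≤ s) (hi : i < ν) : s ^ (ν - 1) ≤ s ^ ν - s ^ i := by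
  have pow_le : s ^ i ≤ s ^ (ν - 1) := Nat.pow_le_pow_right (by omega) (by omega)
  have two_mul_le : 2 * s ^ (ν - 1) ≤ s ^ ν := calc
    2 * s ^ (ν - 1) ≤ s * s ^ (ν - 1) := Nat.mul_le_mul_right _ hs
    _ = s ^ ν := mul_pow_sub_one (by omega) s
  omega

theorem pow_pred_le_of_mem_Hsemi (hs : 2 ≤ s) (hν : 0 < ν) (hx : x ∈ Hsemi s ν)
    (x_pos : 0 < x) : s ^ (ν - 1) ≤ x := by
  obtain rfl | ⟨i, hi, hx⟩ | hx := mem_Hsemi_iff.1 hx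
  · exact absurd x_pos (lt_irrefl 0)
  · obtain ⟨k, k_pos, -, rfl⟩ := (mem_Sset_succ_iff hi).1 hx
    obtain rfl | i_pos := i.eq_zero_or_pos
    · exact le_add_left (Nat.le_mul_of_pos_left _ k_pos)
    · exact le_add_right (pow_pred_le_pow_sub_pow hs (by omega))
  · exact (pow_pred_le_pow_sub_pow hs (by omega)).trans hx.le

end

/-- Any gap between consecutive elements of `H` is at most `s^(ν-1)`: every
positive `x ∈ H` has a predecessor `y ∈ H` with `x - y ≤ s^(ν-1)`. The bound is
attained: `0` and `s^(ν-1)` are consecutive elements of `H`. -/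
theorem stmt8 (s ν : ℕ) (hs : 2 ≤ s) (hν : Even ν) (hν0 : 0 < ν) :
    (∀ x ∈ Hsemi s ν, 0 < x → ∃ y ∈ Hsemi s ν, y < x ∧ x - y ≤ s ^ (ν - 1)) ∧
    (0 : ℕ) ∈ Hsemi s ν ∧ s ^ (ν - 1) ∈ Hsemi s ν ∧
    (∀ z ∈ Hsemi s ν, ¬(0 < z ∧ z < s ^ (ν - 1))) := by
  have two_le : 2 ≤ ν := Nat.le_of_dvd hν0 hν.two_dvd
  refine ⟨fun x hx x_pos => exists_mem_Hsemi_lt_sub_le hs hν hx x_pos, zero_mem_Hsemi,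
    pow_pred_mem_Hsemi hs two_le, ?_⟩
  rintro z hz ⟨z_pos, z_lt⟩
  exact z_lt.not_ge (pow_pred_le_of_mem_Hsemi hs hν0 hz z_pos)
end

section
/- If μ is an integer with μ ≥ s^{ν−1}, then the union of the translates ⋃_{v=0}^{μ−1} (−v + H), taken inside ℤ, equals the set of all integers z with z ≥ −(μ−1). -/
/-- The semigroup `H` viewed as a subset of `ℤ`. -/
def HZ (s ν : ℕ) : Set ℤ := (fun n : ℕ => (n : ℤ)) '' Hsemi s ν

/-!
The semigroup `H` contains every multiple of `s ^ (ν - 1)`: the multiple `0` is `S^0`, the next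
`s - 1` multiples are exactly `S^1`, and from `s ^ ν` on everything is in `S^∞`. An integer `z` lies
in the union of the translates iff `H` meets the window `[z, z + μ)`. For `z > -μ` this window has
length at least `s ^ (ν - 1)` and a positive right endpoint, so it contains a nonnegative multiple
of `s ^ (ν - 1)`.
-/

theorem exists_nsmul_mem_Ico {G : Type*} [AddCommGroup G] [LinearOrder G] [IsOrderedAddMonoid G]
    [Archimedean G] {a b z : G} (ha : 0 < a) (hab : a ≤ b) (hz : 0 < z + b) :
    ∃ k : ℕ, k • a ∈ Set.Ico z (z + b) := by
  have hex : ∃ k : ℕ, z ≤ k • a := Archimedean.arch z ha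
  refine ⟨Nat.find hex, Nat.find_spec hex, ?_⟩
  cases hk : Nat.find hex with
  | zero => simpa only [zero_nsmul] using hz
  | succ k =>
    have hlt : k • a < z := not_le.mp (Nat.find_min hex (by omega))
    calc (k + 1) • a = k • a + a := succ_nsmul a k
      _ < z + b := add_lt_add_of_lt_of_le hlt hab

theorem iUnion_neg_add_image_eq (A : Set ℤ) (μ : ℕ) :
    (⋃ v < μ, (fun h : ℤ => -(v : ℤ) + h) '' A) = {z | (A ∩ Set.Ico z (z + μ)).Nonempty} := by
  ext z
  simp only [Set.mem_iUnion, Set.mem_image, Set.mem_ofPred_eq]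
  constructor
  · rintro ⟨v, hv, h, hA, rfl⟩
    exact ⟨h, hA, by omega, by omega⟩
  · rintro ⟨h, hA, hzh, hhz⟩
    exact ⟨(h - z).toNat, by omega, h, hA, by omega⟩

section Semigroup

variable {s ν : ℕ}

theorem mem_Sset_one (hν : 2 ≤ ν) {x : ℕ} :
    x ∈ Sset s ν 1 ↔ ∃ k, 1 ≤ k ∧ k ≤ s - 1 ∧ x = k * s ^ (ν - 1) := by
  have htop : ν - 1 + 1 = ν := by omega
  have hstep : ν - 2 * 1 + 1 = ν - 1 := by omega
  simp only [Sset, one_ne_zero, if_false, Set.mem_ofPred_eq, htop, hstep, pow_one, Nat.sub_self,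
    pow_zero, zero_add]

theorem Sset_subset_Hsemi {i : ℕ} (hi : i ≤ ν / 2) : Sset s ν i ⊆ Hsemi s ν :=
  (Set.subset_iUnion₂ (s := fun j (_ : j ≤ ν / 2) => Sset s ν j) i hi).trans
    Set.subset_union_left

theorem mem_Hsemi_of_pow_le (hs : 0 < s) {n : ℕ} (hn : s ^ ν ≤ n) : n ∈ Hsemi s ν := by
  have hlt : s ^ ν - s ^ (ν / 2) < s ^ ν := Nat.sub_lt (Nat.pow_pos hs) (Nat.pow_pos hs)
  exact Or.inr (hlt.trans_le hn)

theorem mul_pow_mem_Hsemi (hs : 0 < s) (hν : 2 ≤ ν) (k : ℕ) : k * s ^ (ν - 1) ∈ Hsemi s ν := by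
  rcases Nat.eq_zero_or_pos k with rfl | hk
  · exact Sset_subset_Hsemi (Nat.zero_le _) (by simp [Sset])
  rcases Nat.lt_or_ge k s with hks | hsk
  · exact Sset_subset_Hsemi (by omega) ((mem_Sset_one hν).mpr ⟨k, hk, by omega, rfl⟩)
  · refine mem_Hsemi_of_pow_le hs ?_
    calc s ^ ν = s * s ^ (ν - 1) := (mul_pow_sub_one (by omega) s).symm
      _ ≤ k * s ^ (ν - 1) := Nat.mul_le_mul_right _ hsk

end Semigroup

theorem stmt9_general (s ν : ℕ) (hs : 0 < s) (hν : 2 ≤ ν) (μ : ℕ) (hμ : s ^ (ν - 1) ≤ μ) :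
    (⋃ v < μ, (fun h : ℤ => -(v : ℤ) + h) '' HZ s ν) =
      {z : ℤ | -((μ : ℤ) - 1) ≤ z} := by
  rw [iUnion_neg_add_image_eq]
  ext z
  simp only [Set.mem_ofPred_eq]
  constructor
  · rintro ⟨_, ⟨n, _, rfl⟩, _, hn : (n : ℤ) < z + μ⟩
    omega
  · intro hz
    have hpos : (0 : ℤ) < (s ^ (ν - 1) : ℕ) := mod_cast Nat.pow_pos hs
    obtain ⟨k, hk⟩ := exists_nsmul_mem_Ico hpos (Nat.cast_le.mpr hμ) (z := z) (by omega)
    rw [nsmul_eq_mul, ← Nat.cast_mul] at hk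
    exact ⟨_, Set.mem_image_of_mem _ (mul_pow_mem_Hsemi hs hν k), hk⟩

/-- If `μ ≥ s^(ν-1)`, then `⋃_{v=0}^{μ-1} (-v + H) = {z : ℤ | z ≥ -(μ-1)}`. -/
theorem stmt9 (s ν : ℕ) (hs : 2 ≤ s) (hν : Even ν) (hν0 : 0 < ν)
    (μ : ℕ) (hμ : s ^ (ν - 1) ≤ μ) :
    (⋃ v < μ, (fun h : ℤ => -(v : ℤ) + h) '' HZ s ν) =
      {z : ℤ | -((μ : ℤ) - 1) ≤ z} :=
  stmt9_general s ν (by omega) (Nat.le_of_dvd hν0 hν.two_dvd) μ hμ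
end

section
/- For every integer t with 1 ≤ t ≤ c, the number of integers in the interval [c − t, c) that do not belong to H is at least ⌊ t·(1 − 1/s) ⌋ = ⌊ t(s−1)/s ⌋. -/
/-!
Every element of `H` below `c` is a multiple of `s`, and so is `c`. The reflection `n ↦ c - n`
therefore matches the multiples of `s` in `[c - t, c)` with those in `(0, t]`, of which there are
`⌊t / s⌋`; the remaining `t - ⌊t / s⌋ = ⌈t(s - 1) / s⌉` integers of `[c - t, c)` are not in `H`.
-/

open Finset in
lemma card_Ico_sub_filter_dvd {s c t : ℕ} (hc : s ∣ c) (ht : t ≤ c) :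
    #{n ∈ Ico (c - t) c | s ∣ n} = t / s := by
  rw [← Nat.Ioc_filter_dvd_card_eq_div t s]
  refine card_nbij' (c - ·) (c - ·) ?_ ?_ ?_ ?_ <;> intro n hn <;>
    simp only [mem_coe, mem_filter, mem_Ico, mem_Ioc] at hn ⊢
  · exact ⟨by omega, Nat.dvd_sub hc hn.2⟩
  · exact ⟨by omega, Nat.dvd_sub hc hn.2⟩
  · omega
  · omega

open Finset in
lemma card_Ico_sub_filter_not_dvd {s c t : ℕ} (hc : s ∣ c) (ht : t ≤ c) :
    #{n ∈ Ico (c - t) c | ¬ s ∣ n} = t - t / s := by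
  have h_split := card_filter_add_card_filter_not (s := Ico (c - t) c) (s ∣ ·)
  rw [card_Ico_sub_filter_dvd hc ht, Nat.card_Ico] at h_split
  omega

lemma sub_div_le_ncard_of_forall_dvd {H : Set ℕ} {s c t : ℕ} (hc : s ∣ c) (ht : t ≤ c)
    (hH : ∀ n ∈ H, n < c → s ∣ n) :
    t - t / s ≤ {n | c - t ≤ n ∧ n < c ∧ n ∉ H}.ncard := by
  rw [← card_Ico_sub_filter_not_dvd hc ht, ← Set.ncard_coe_finset]
  refine Set.ncard_le_ncard (fun n hn ↦ ?_) ((Set.finite_lt_nat c).subset fun n hn ↦ hn.2.1)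
  obtain ⟨hn_mem, hn_dvd⟩ := Finset.mem_filter.mp (Finset.mem_coe.mp hn)
  obtain ⟨hn_ge, hn_lt⟩ := Finset.mem_Ico.mp hn_mem
  exact ⟨hn_ge, hn_lt, fun hnH ↦ hn_dvd (hH n hnH hn_lt)⟩

lemma mul_pred_div_le_sub_div (t s : ℕ) : t * (s - 1) / s ≤ t - t / s := by
  apply Nat.div_le_of_le_mul
  calc t * (s - 1) = s * t - t := by rw [Nat.mul_sub_one, mul_comm]
    _ ≤ s * t - s * (t / s) := Nat.sub_le_sub_left (Nat.mul_div_le t s) _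
    _ = s * (t - t / s) := (Nat.mul_sub s t (t / s)).symm

lemma dvd_of_mem_Sset {s ν i n : ℕ} (hν : ν ≠ 0) (hn : n ∈ Sset s ν i) : s ∣ n := by
  unfold Sset at hn
  split_ifs at hn
  · rw [Set.mem_singleton_iff.mp hn]
    exact dvd_zero s
  · obtain ⟨k, -, -, rfl⟩ := hn
    exact dvd_add (Nat.dvd_sub (dvd_pow_self s hν) (dvd_pow_self s (Nat.succ_ne_zero _)))
      (dvd_mul_of_dvd_right (dvd_pow_self s (Nat.succ_ne_zero _)) k)

lemma dvd_of_mem_Hsemi_of_lt {s ν n : ℕ} (hν : ν ≠ 0) (hn : n ∈ Hsemi s ν)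
    (hn_lt : n < s ^ ν - s ^ (ν / 2)) : s ∣ n := by
  rcases hn with hn | hn
  · obtain ⟨i, -, hn⟩ := Set.mem_iUnion₂.mp hn
    exact dvd_of_mem_Sset hν hn
  · exact absurd hn_lt (Nat.lt_of_succ_le hn).not_gt

theorem stmt12_general {s ν t : ℕ} (hν : 2 ≤ ν) (ht : t ≤ s ^ ν - s ^ (ν / 2)) :
    t - t / s ≤
      {n : ℕ | s ^ ν - s ^ (ν / 2) - t ≤ n ∧ n < s ^ ν - s ^ (ν / 2) ∧
        n ∉ Hsemi s ν}.ncard := by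
  have hc : s ∣ s ^ ν - s ^ (ν / 2) :=
    Nat.dvd_sub (dvd_pow_self s (by omega)) (dvd_pow_self s (by omega))
  exact sub_div_le_ncard_of_forall_dvd hc ht fun n ↦ dvd_of_mem_Hsemi_of_lt (by omega)

/-- For `1 ≤ t ≤ c`, the number of integers in `[c - t, c)` not belonging to `H`
is at least `⌊t(s-1)/s⌋`. -/
theorem stmt12 (s ν : ℕ) (hs : 2 ≤ s) (hν : Even ν) (hν0 : 0 < ν)
    (t : ℕ) (ht1 : 1 ≤ t) (ht2 : t ≤ s ^ ν - s ^ (ν / 2)) :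
    t * (s - 1) / s ≤
      {n : ℕ | s ^ ν - s ^ (ν / 2) - t ≤ n ∧ n < s ^ ν - s ^ (ν / 2) ∧
        n ∉ Hsemi s ν}.ncard :=
  (mul_pred_div_le_sub_div t s).trans (stmt12_general (Nat.le_of_dvd hν0 hν.two_dvd) ht2)
end

section
/- For all integers 2 ≤ m ≤ μ with μ < s^{ν+1}, one has Z(H, μ, m) ≥ (m−1)·q^{ν/4 − u*/2} + q^{u* − 1/2}(1 − q^{−1/2}) − 1, where u* = (2/3)·(1 + ν/4 + log_q((m−1)/(2(√q − 1)))). (This is the bound of the paper's Theorem 2 in the case of small m; it holds for all m in the stated range because u* is the global minimizer of the function u ↦ (m−1)q^{ν/4−u/2} + q^{u−1/2}(1−q^{−1/2}) − 1 over ℝ.) -/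
/-- `Z(H(Q_ν), μ, m)`: the minimum, over choices of integers
`-(μ-1) ≤ i_1 < i_2 < ⋯ < i_(m-1) ≤ -1`, of
`#{α ∈ ⋃_{v=1}^{m-1} (i_v + H) : α ∉ H}`. -/
noncomputable def Zval (s ν μ m : ℕ) : ℕ :=
  sInf {z : ℕ | ∃ i : ℕ → ℤ,
    (∀ v w, 1 ≤ v → v < w → w ≤ m - 1 → i v < i w) ∧
    (∀ v, 1 ≤ v → v ≤ m - 1 → -((μ : ℤ) - 1) ≤ i v ∧ i v ≤ -1) ∧
    z = {α : ℤ | (∃ v : ℕ, 1 ≤ v ∧ v ≤ m - 1 ∧ ∃ h ∈ Hsemi s ν, α = i v + (h : ℤ)) ∧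
          α ∉ HZ s ν}.ncard}

/-!
Write `ν = 2n` and `c = s^ν - s^(ν/2)`. Up to `s^ν - s^(n+v)` the semigroup `H` has exactly
`s^(n-v)` elements, all of them multiples of `s^(2v+1)`, and up to `c` all its elements are
multiples of `s`. Take `v` minimal such that every shift exceeds `-s^(2v+1)`. The sums of a shift
and a low element of `H` are then pairwise distinct and none of them is a multiple of `s^(2v+1)`,
so they are `(m-1) s^(n-v)` elements outside `H`. If `v ≥ 1`, some shift is at most `-s^(2v-1)`, so
it moves the tail of `H` over `(c - s^(2v-1), c]`, whose `(s-1) s^(2v-2)` non-multiples of `s` are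
outside `H` as well. Altogether `Z(H, μ, m)` is at least the value at `u = v` of the function
`(m-1) q^(ν/4-u/2) + q^(u-1/2) (1-q^(-1/2)) - 1` of `u`. In the variable `q^(u/2)` this function is
`a/x + b x² - 1`, which has a unique minimum on `x > 0`, attained at `u = u*`.
-/

section Sumset

open scoped Pointwise

variable {H I K : Set ℤ} {a b c d : ℤ}

theorem ncard_Ioc_sub_mul_dvd {d : ℕ} (hd : 0 < d) (c : ℤ) (L : ℕ) :
    {x ∈ Set.Ioc (c - d * L) c | (d : ℤ) ∣ x}.ncard = L := by
  have hcoe : {x ∈ Set.Ioc (c - d * L) c | (d : ℤ) ∣ x} =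
      ({x ∈ Finset.Ioc (c - d * L) c | (d : ℤ) ∣ x} : Finset ℤ) := by
    simp only [Finset.coe_filter, Finset.mem_Ioc, Set.mem_Ioc]
  have hdiv : ((c - d * L : ℤ) : ℚ) / ((d : ℤ) : ℚ) = (c : ℚ) / (d : ℤ) - L := by
    push_cast
    field_simp
  have hcard := Int.Ioc_filter_dvd_card (c - d * L) c (r := d) (by exact_mod_cast hd)
  rw [hdiv, Int.floor_sub_natCast] at hcard
  rw [hcoe, Set.ncard_coe_finset]
  omega

theorem ncard_Ioc_sub_mul_not_dvd {d : ℕ} (hd : 0 < d) (c : ℤ) (L : ℕ) :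
    {x ∈ Set.Ioc (c - d * L) c | ¬ (d : ℤ) ∣ x}.ncard = (d - 1) * L := by
  have hsum : {x ∈ Set.Ioc (c - d * L) c | (d : ℤ) ∣ x}.ncard +
      {x ∈ Set.Ioc (c - d * L) c | ¬ (d : ℤ) ∣ x}.ncard = (Set.Ioc (c - d * L) c).ncard :=
    Set.ncard_inter_add_ncard_sdiff_eq_ncard _ {x | (d : ℤ) ∣ x} (Set.finite_Ioc _ _)
  have hlen : (Set.Ioc (c - d * L) c).ncard = d * L := by
    rw [← Finset.coe_Ioc, Set.ncard_coe_finset, Int.card_Ioc, sub_sub_cancel]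
    exact_mod_cast Int.toNat_natCast (d * L)
  rw [ncard_Ioc_sub_mul_dvd hd, hlen] at hsum
  rw [Nat.sub_mul, one_mul]
  exact Nat.eq_sub_of_add_eq' hsum

theorem ncard_add_of_forall_dvd (hI : I ⊆ Set.Ico c (c + d)) (hK : ∀ k ∈ K, d ∣ k) :
    (I + K).ncard = I.ncard * K.ncard := by
  rw [← Set.add_image_prod, ← Set.ncard_prod]
  refine Set.InjOn.ncard_image ?_
  rintro ⟨a, h⟩ ⟨ha, hh⟩ ⟨b, g⟩ ⟨hb, hg⟩ (hab : a + h = b + g)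
  have hdvd : d ∣ a - b := by
    rw [show a - b = g - h by linarith]
    exact dvd_sub (hK g hg) (hK h hh)
  have hlt : |a - b| < d := by
    have ⟨hca, had⟩ := hI ha
    have ⟨hcb, hbd⟩ := hI hb
    rw [abs_lt]
    constructor <;> linarith
  have hzero := Int.eq_zero_of_abs_lt_dvd hdvd hlt
  ext <;> dsimp only <;> linarith

theorem finite_add_sdiff (hI : BddBelow I) (hH : BddBelow H) (hc : Set.Ioi c ⊆ H) :
    ((I + H) \ H).Finite :=
  BddBelow.finite_of_bddAbove ((hI.add hH).mono Set.sdiff_subset)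
    ⟨c, fun _ hx => not_lt.1 fun hlt => hx.2 (hc hlt)⟩

-- Modulo `d`, a sum `a + h` with `h ≤ b` is congruent to `a`, hence is not `0`.
theorem add_inter_Iic_subset (hH : ∀ h ∈ H, h ≤ b → d ∣ h) (hI : I ⊆ Set.Ioo (-d) 0) :
    I + H ∩ Set.Iic b ⊆ ((I + H) \ H) ∩ Set.Iio b := by
  rintro _ ⟨a, ha, h, ⟨hh, hhb⟩, rfl⟩
  have ⟨hda, ha0⟩ := hI ha
  rw [Set.mem_Iic] at hhb
  have hlt : a + h < b := by linarith
  refine ⟨⟨Set.add_mem_add ha hh, fun hah => ha0.ne ?_⟩, hlt⟩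
  refine Int.eq_zero_of_abs_lt_dvd ((dvd_add_left (hH h hh hhb)).1 (hH _ hah hlt.le)) ?_
  rw [abs_of_neg ha0]
  linarith

theorem Ioc_not_dvd_subset (hH : ∀ h ∈ H, h ≤ c → d ∣ h) (hc : Set.Ioi c ⊆ H)
    (haI : a ∈ I) (hab : a ≤ b - c) :
    {x ∈ Set.Ioc b c | ¬ d ∣ x} ⊆ ((I + H) \ H) ∩ Set.Ioi b := by
  rintro x ⟨⟨hbx, hxc⟩, hdx⟩
  have hxa : x - a ∈ H := hc (Set.mem_Ioi.2 (by linarith))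
  exact ⟨⟨⟨a, haI, x - a, hxa, add_sub_cancel a x⟩, fun hxH => hdx (hH x hxH hxc)⟩, hbx⟩

end Sumset

section Semigroup

variable {s n v k : ℕ} {x : ℤ}

/-- The largest element `s^ν - s^(ν-i)` of the block `S^i`, for `ν = 2n` and `i = n - v`.
Counting the blocks down from the conductor, which is the case `v = 0`, makes all exponents
free of subtraction. -/
def blockMax (s n v : ℕ) : ℤ := (s : ℤ) ^ (2 * n) - (s : ℤ) ^ (n + v)

theorem blockMax_self (s n : ℕ) : blockMax s n n = 0 := by
  rw [blockMax, two_mul, sub_self]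

theorem blockMax_antitone (hs : 0 < s) : Antitone (blockMax s n) := fun u v huv =>
  sub_le_sub_left (pow_le_pow_right₀ (by exact_mod_cast hs) (by omega)) _

theorem blockMax_nonneg (hs : 0 < s) (hv : v ≤ n) : 0 ≤ blockMax s n v :=
  (blockMax_self s n).ge.trans (blockMax_antitone hs hv)

theorem blockMax_succ_le_sub (hs : 2 ≤ s) (hv : v < n) :
    blockMax s n (v + 1) ≤ blockMax s n 0 - s ^ (2 * v + 1) := by
  have hn : s ^ n ≤ s ^ (n + v) := Nat.pow_le_pow_right (by omega) (by omega)
  have hv' : s ^ (2 * v + 1) ≤ s ^ (n + v) := Nat.pow_le_pow_right (by omega) (by omega)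
  have hdouble : 2 * s ^ (n + v) ≤ s ^ (n + (v + 1)) := by
    rw [← add_assoc, pow_succ']
    gcongr
  zify at hn hv' hdouble
  simp only [blockMax, add_zero]
  linarith

theorem blockMax_eq_add_mul (s v w : ℕ) :
    blockMax s (v + 1 + w) v =
      blockMax s (v + 1 + w) (v + 1) + s ^ (2 * v + 1) * (s ^ (w + 1) - s ^ w) := by
  simp only [blockMax]
  ring

theorem pow_dvd_blockMax (hv : v ≤ n) (h : k ≤ n + v) : (s : ℤ) ^ k ∣ blockMax s n v :=
  dvd_sub (pow_dvd_pow _ (by omega)) (pow_dvd_pow _ h)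

theorem mem_Sset_succ {w y : ℕ} (hs : 0 < s) :
    y ∈ Sset s (2 * (v + 1 + w)) (w + 1) ↔ ∃ k, 1 ≤ k ∧ k ≤ s ^ (w + 1) - s ^ w ∧
      (y : ℤ) = blockMax s (v + 1 + w) (v + 1) + s ^ (2 * v + 1) * k := by
  have hpow : s ^ (v + 1 + w + (v + 1)) ≤ s ^ (2 * (v + 1 + w)) :=
    Nat.pow_le_pow_right hs (by omega)
  have hcast (k : ℕ) : y = s ^ (2 * (v + 1 + w)) - s ^ (v + 1 + w + (v + 1)) +
      k * s ^ (2 * v + 1) ↔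
      (y : ℤ) = blockMax s (v + 1 + w) (v + 1) + s ^ (2 * v + 1) * k := by
    rw [blockMax, mul_comm (_ ^ _) (k : ℤ)]
    zify [hpow]
  rw [Sset, if_neg w.succ_ne_zero, Nat.add_sub_cancel,
    show 2 * (v + 1 + w) - (w + 1) + 1 = v + 1 + w + (v + 1) by omega,
    show 2 * (v + 1 + w) - 2 * (w + 1) + 1 = 2 * v + 1 by omega]
  simp only [hcast, Set.mem_ofPred_eq]

theorem natCast_image_Sset (hs : 0 < s) (hv : v < n) :
    (Nat.cast '' Sset s (2 * n) (n - v) : Set ℤ) =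
      {x ∈ Set.Ioc (blockMax s n (v + 1)) (blockMax s n v) | (s : ℤ) ^ (2 * v + 1) ∣ x} := by
  obtain ⟨w, rfl⟩ : ∃ w, n = v + 1 + w := Nat.exists_eq_add_of_le hv
  have hd : (0 : ℤ) < (s : ℤ) ^ (2 * v + 1) := by positivity
  have hpow : s ^ w ≤ s ^ (w + 1) := Nat.pow_le_pow_right hs (by omega)
  have hdvd := pow_dvd_blockMax (s := s) (k := 2 * v + 1) hv (by omega)
  rw [show v + 1 + w - v = w + 1 by omega]
  ext x
  constructor
  · rintro ⟨y, hy, rfl⟩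
    obtain ⟨k, hk, hk', hyk⟩ := (mem_Sset_succ hs).1 hy
    zify [hpow] at hk hk'
    rw [hyk]
    refine ⟨⟨lt_add_of_pos_right _ (mul_pos hd hk), ?_⟩, dvd_add hdvd (dvd_mul_right _ _)⟩
    rw [blockMax_eq_add_mul]
    gcongr
  · rintro ⟨⟨hlt, hle⟩, hdx⟩
    obtain ⟨k, hk⟩ := (dvd_sub_left hdvd).2 hdx
    lift x to ℕ using (blockMax_nonneg hs hv).trans hlt.le
    have hk0 : 0 < k := pos_of_mul_pos_right (by linarith : 0 < (s : ℤ) ^ (2 * v + 1) * k) hd.le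
    lift k to ℕ using hk0.le
    rw [blockMax_eq_add_mul, ← sub_le_iff_le_add', hk] at hle
    have hk' : (k : ℤ) ≤ s ^ (w + 1) - s ^ w := le_of_mul_le_mul_left hle hd
    refine ⟨x, (mem_Sset_succ hs).2 ⟨k, by exact_mod_cast hk0, ?_, by linarith⟩, rfl⟩
    zify [hpow]
    exact hk'

theorem natCast_image_Sinf (hs : 0 < s) :
    (Nat.cast '' Sinf s (2 * n) : Set ℤ) = Set.Ioi (blockMax s n 0) := by
  have hpow : s ^ n ≤ s ^ (2 * n) := Nat.pow_le_pow_right hs (by omega)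
  have hmem (y : ℕ) : y ∈ Sinf s (2 * n) ↔ blockMax s n 0 < y := by
    rw [Sinf, Set.mem_ofPred_eq, Nat.mul_div_cancel_left n two_pos, blockMax, add_zero]
    zify [hpow]
    exact Int.add_one_le_iff
  ext x
  constructor
  · rintro ⟨y, hy, rfl⟩
    exact (hmem y).1 hy
  · intro hx
    lift x to ℕ using (blockMax_nonneg hs n.zero_le).trans (le_of_lt hx)
    exact ⟨x, (hmem x).2 hx, rfl⟩

theorem HZ_two_mul (hs : 0 < s) :
    HZ s (2 * n) = {0} ∪
      (⋃ v < n,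
        {x ∈ Set.Ioc (blockMax s n (v + 1)) (blockMax s n v) | (s : ℤ) ^ (2 * v + 1) ∣ x}) ∪
      Set.Ioi (blockMax s n 0) := by
  have hblocks : (⋃ i ≤ n, Sset s (2 * n) i) = {0} ∪ ⋃ v < n, Sset s (2 * n) (n - v) := by
    ext y
    simp only [Set.mem_union, Set.mem_iUnion, exists_prop]
    constructor
    · rintro ⟨i, hi, hy⟩
      rcases Nat.eq_zero_or_pos i with rfl | hi0
      · exact Or.inl hy
      · exact Or.inr ⟨n - i, by omega, by rwa [Nat.sub_sub_self hi]⟩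
    · rintro (hy | ⟨v, -, hy⟩)
      · exact ⟨0, n.zero_le, hy⟩
      · exact ⟨n - v, n.sub_le v, hy⟩
  rw [HZ, Hsemi, Nat.mul_div_cancel_left n two_pos, hblocks, Set.image_union, Set.image_union,
    natCast_image_Sinf hs, Set.image_singleton, Nat.cast_zero, Set.image_iUnion₂]
  congr! 6 with v hv
  exact natCast_image_Sset hs hv

theorem pow_dvd_of_mem_HZ (hs : 0 < s) (hx : x ∈ HZ s (2 * n)) (hxv : x ≤ blockMax s n v) :
    (s : ℤ) ^ (2 * v + 1) ∣ x := by
  rw [HZ_two_mul hs] at hx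
  simp only [Set.mem_union, Set.mem_iUnion, exists_prop] at hx
  rcases hx with (rfl | ⟨u, -, ⟨hux, -⟩, hdvd⟩) | hx
  · exact dvd_zero _
  · have hvu : v < u + 1 := (blockMax_antitone hs).reflect_lt (hux.trans_le hxv)
    exact (pow_dvd_pow _ (by omega)).trans hdvd
  · exact absurd ((blockMax_antitone hs).reflect_lt (lt_of_lt_of_le hx hxv)) v.not_lt_zero

theorem Ioi_blockMax_zero_subset_HZ (hs : 0 < s) : Set.Ioi (blockMax s n 0) ⊆ HZ s (2 * n) := by
  rw [HZ_two_mul hs]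
  exact Set.subset_union_right

theorem bddBelow_HZ (s ν : ℕ) : BddBelow (HZ s ν) :=
  ⟨0, by rintro _ ⟨y, -, rfl⟩; exact y.cast_nonneg⟩

theorem HZ_inter_Iic_blockMax_self (hs : 0 < s) :
    HZ s (2 * n) ∩ Set.Iic (blockMax s n n) = {0} := by
  rw [blockMax_self]
  refine Set.Subset.antisymm ?_ ?_
  · rintro _ ⟨⟨y, -, rfl⟩, hy⟩
    exact le_antisymm hy y.cast_nonneg
  · rintro _ rfl
    rw [HZ_two_mul hs]
    exact ⟨Or.inl (Or.inl rfl), Set.self_mem_Iic⟩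

theorem HZ_inter_Iic_blockMax (hs : 0 < s) (hv : v < n) :
    HZ s (2 * n) ∩ Set.Iic (blockMax s n v) = HZ s (2 * n) ∩ Set.Iic (blockMax s n (v + 1)) ∪
      {x ∈ Set.Ioc (blockMax s n (v + 1)) (blockMax s n v) | (s : ℤ) ^ (2 * v + 1) ∣ x} := by
  have hsucc : blockMax s n (v + 1) ≤ blockMax s n v := blockMax_antitone hs v.le_succ
  ext x
  constructor
  · rintro ⟨hx, hxv⟩
    rcases le_or_gt x (blockMax s n (v + 1)) with hle | hlt
    · exact Or.inl ⟨hx, hle⟩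
    · exact Or.inr ⟨⟨hlt, hxv⟩, pow_dvd_of_mem_HZ hs hx hxv⟩
  · rintro (⟨hx, hle⟩ | hx)
    · exact ⟨hx, hle.trans hsucc⟩
    · rw [HZ_two_mul hs]
      exact ⟨Or.inl (Or.inr (Set.mem_iUnion₂_of_mem hv hx)), hx.1.2⟩

theorem ncard_HZ_inter_Iic_blockMax (hs : 0 < s) {w : ℕ} (hvw : v + w = n) :
    (HZ s (2 * n) ∩ Set.Iic (blockMax s n v)).ncard = s ^ w := by
  induction w generalizing v with
  | zero =>
    obtain rfl : v = n := hvw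
    rw [HZ_inter_Iic_blockMax_self hs, Set.ncard_singleton, pow_zero]
  | succ w ih =>
    have hpow : s ^ w ≤ s ^ (w + 1) := Nat.pow_le_pow_right hs (by omega)
    have hsucc : blockMax s n (v + 1) =
        blockMax s n v - (s ^ (2 * v + 1) : ℕ) * (s ^ (w + 1) - s ^ w : ℕ) := by
      obtain rfl : n = v + 1 + w := by omega
      rw [blockMax_eq_add_mul s v w]
      push_cast [hpow]
      ring
    have hblock : {x ∈ Set.Ioc (blockMax s n (v + 1)) (blockMax s n v) |
        (s : ℤ) ^ (2 * v + 1) ∣ x}.ncard = s ^ (w + 1) - s ^ w := by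
      rw [hsucc, ← Nat.cast_pow, ncard_Ioc_sub_mul_dvd (by positivity)]
    have hfin : (HZ s (2 * n) ∩ Set.Iic (blockMax s n (v + 1))).Finite :=
      ((bddBelow_HZ _ _).mono Set.inter_subset_left).finite_of_bddAbove
        (bddAbove_Iic.mono Set.inter_subset_right)
    rw [HZ_inter_Iic_blockMax hs (by omega), Set.ncard_union_eq _ hfin, ih (by omega), hblock,
      Nat.add_sub_cancel' hpow]
    exact Set.disjoint_left.2 fun x hx hx' => hx'.1.1.not_ge hx.2

section Shifts

open scoped Pointwise

variable {I : Set ℤ} {a : ℤ}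

theorem finite_add_HZ_sdiff (hs : 0 < s) (hI : BddBelow I) :
    ((I + HZ s (2 * n)) \ HZ s (2 * n)).Finite :=
  finite_add_sdiff hI (bddBelow_HZ _ _) (Ioi_blockMax_zero_subset_HZ hs)

theorem ncard_add_HZ_inter_Iic (hs : 0 < s) (hv : v ≤ n)
    (hI : I ⊆ Set.Ioo (-(s : ℤ) ^ (2 * v + 1)) 0) :
    (I + HZ s (2 * n) ∩ Set.Iic (blockMax s n v)).ncard = I.ncard * s ^ (n - v) := by
  rw [← ncard_HZ_inter_Iic_blockMax hs (Nat.add_sub_cancel' hv)]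
  refine ncard_add_of_forall_dvd (c := -(s : ℤ) ^ (2 * v + 1)) (d := (s : ℤ) ^ (2 * v + 1)) ?_
    fun h hh => pow_dvd_of_mem_HZ hs hh.1 hh.2
  rw [neg_add_cancel]
  exact hI.trans Set.Ioo_subset_Ico_self

theorem ncard_mul_pow_le (hs : 0 < s) (hv : v ≤ n)
    (hI : I ⊆ Set.Ioo (-(s : ℤ) ^ (2 * v + 1)) 0) :
    I.ncard * s ^ (n - v) ≤ ((I + HZ s (2 * n)) \ HZ s (2 * n)).ncard := by
  rw [← ncard_add_HZ_inter_Iic hs hv hI]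
  refine Set.ncard_le_ncard ?_ (finite_add_HZ_sdiff hs (bddBelow_Ioo.mono hI))
  exact (add_inter_Iic_subset (fun h => pow_dvd_of_mem_HZ hs) hI).trans Set.inter_subset_left

-- The shifts of the low part of `H` stay below `blockMax s n (v + 1)`; the non-multiples of `s`
-- just below the conductor, all covered by the shift by `a`, lie above it.
theorem ncard_mul_pow_add_le (hs : 2 ≤ s) (hv : v < n)
    (hI : I ⊆ Set.Ioo (-(s : ℤ) ^ (2 * (v + 1) + 1)) 0)
    (haI : a ∈ I) (ha : a ≤ -(s : ℤ) ^ (2 * v + 1)) :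
    I.ncard * s ^ (n - (v + 1)) + (s - 1) * s ^ (2 * v) ≤
      ((I + HZ s (2 * n)) \ HZ s (2 * n)).ncard := by
  have hs0 : 0 < s := by omega
  have hlen : (s : ℤ) * (s ^ (2 * v) : ℕ) = (s : ℤ) ^ (2 * v + 1) := by
    push_cast
    ring
  set c := blockMax s n 0
  set low := I + HZ s (2 * n) ∩ Set.Iic (blockMax s n (v + 1))
  set high := {x ∈ Set.Ioc (c - s * (s ^ (2 * v) : ℕ)) c | ¬ (s : ℤ) ∣ x}
  have hlow : low ⊆ ((I + HZ s (2 * n)) \ HZ s (2 * n)) ∩ Set.Iio (blockMax s n (v + 1)) :=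
    add_inter_Iic_subset (fun h => pow_dvd_of_mem_HZ hs0) hI
  have hhigh : high ⊆ ((I + HZ s (2 * n)) \ HZ s (2 * n)) ∩
      Set.Ioi (c - s * (s ^ (2 * v) : ℕ)) := by
    refine Ioc_not_dvd_subset (fun h hh hhc => ?_) (Ioi_blockMax_zero_subset_HZ hs0) haI ?_
    · simpa only [mul_zero, zero_add, pow_one] using pow_dvd_of_mem_HZ hs0 hh hhc
    · linarith
  have hfin := finite_add_HZ_sdiff (n := n) hs0 (bddBelow_Ioo.mono hI)
  have hlow' := hlow.trans Set.inter_subset_left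
  have hhigh' := hhigh.trans Set.inter_subset_left
  have hdisj : Disjoint low high := Set.disjoint_left.2 fun x hx hx' => by
    have hlt : x < blockMax s n (v + 1) := (hlow hx).2
    have hgt : c - s * (s ^ (2 * v) : ℕ) < x := (hhigh hx').2
    linarith [blockMax_succ_le_sub hs hv]
  calc I.ncard * s ^ (n - (v + 1)) + (s - 1) * s ^ (2 * v)
      = (low ∪ high).ncard := by
        rw [Set.ncard_union_eq hdisj (hfin.subset hlow') (hfin.subset hhigh'),
          ncard_add_HZ_inter_Iic hs0 hv hI, ncard_Ioc_sub_mul_not_dvd hs0]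
    _ ≤ ((I + HZ s (2 * n)) \ HZ s (2 * n)).ncard :=
        Set.ncard_le_ncard (Set.union_subset hlow' hhigh') hfin

theorem exists_Zval_eq {ν m μ : ℕ} (s : ℕ) (hmμ : m ≤ μ) :
    ∃ I ⊆ Set.Icc (-((μ : ℤ) - 1)) (-1), I.ncard = m - 1 ∧
      Zval s ν μ m = ((I + HZ s ν) \ HZ s ν).ncard := by
  obtain ⟨i, hlt, hmem, hZ⟩ : Zval s ν μ m ∈ _ := Nat.sInf_mem
    ⟨_, fun v => (v : ℤ) - m, by intros; simp only; omega, by intros; simp only; omega, rfl⟩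
  have hmono : StrictMonoOn i (Set.Icc 1 (m - 1)) :=
    fun v hv w hw hvw => hlt v w hv.1 hvw hw.2
  refine ⟨i '' Set.Icc 1 (m - 1), ?_, ?_, ?_⟩
  · rintro _ ⟨v, hv, rfl⟩
    exact hmem v hv.1 hv.2
  · rw [hmono.injOn.ncard_image, ← Finset.coe_Icc, Set.ncard_coe_finset, Nat.card_Icc,
      Nat.add_sub_cancel]
  · rw [hZ]
    congr 1
    ext x
    simp only [HZ, Set.mem_sdiff, Set.mem_add, Set.exists_mem_image, Set.mem_Icc, and_assoc,
      Set.mem_ofPred_eq, eq_comm]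

end Shifts

end Semigroup

/-- The function of `u` (with `M = m - 1`) whose minimum over `u : ℝ` is the bound on
`Z(H, μ, m)`. -/
noncomputable def towerBound (q ν M u : ℝ) : ℝ :=
  M * q ^ (ν / 4 - u / 2) + q ^ (u - 1 / 2) * (1 - q ^ (-(1 : ℝ) / 2)) - 1

section TowerBound

variable {q : ℝ}

theorem towerBound_eq (hq : 0 < q) (ν M u : ℝ) :
    towerBound q ν M u =
      M * q ^ (ν / 4) / q ^ (u / 2) + (√q - 1) / q * (q ^ (u / 2)) ^ 2 - 1 := by
  have hsqrt : 0 < √q := Real.sqrt_pos.2 hq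
  have hinv : q ^ (-(1 : ℝ) / 2) = (√q)⁻¹ := by
    rw [neg_div, Real.rpow_neg hq.le, Real.sqrt_eq_rpow]
  have hmul : q ^ (u - 1 / 2) = (q ^ (u / 2)) ^ 2 / √q := by
    rw [Real.rpow_sub hq, ← Real.sqrt_eq_rpow, ← Real.rpow_mul_natCast hq.le]
    push_cast
    rw [div_mul_cancel₀ u two_ne_zero]
  have hsq : (√q - 1) / q = (√q)⁻¹ * (1 - (√q)⁻¹) := by
    rw [← Real.sq_sqrt hq.le, Real.sqrt_sq hsqrt.le]
    field_simp
  rw [towerBound, Real.rpow_sub hq, hmul, hinv, hsq]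
  ring

theorem three_mul_sq_le {t x : ℝ} (ht : 0 ≤ t) (hx : 0 < x) :
    3 * t ^ 2 ≤ 2 * t ^ 3 / x + x ^ 2 := by
  have hdiff : 2 * t ^ 3 / x + x ^ 2 - 3 * t ^ 2 = (x - t) ^ 2 * (x + 2 * t) / x := by
    field_simp
    ring
  have hnonneg : 0 ≤ (x - t) ^ 2 * (x + 2 * t) / x := by positivity
  linarith

theorem towerBound_minimizer_le {M : ℝ} (hq : 1 < q) (hM : 0 < M) (ν u : ℝ) :
    towerBound q ν M (2 / 3 * (1 + ν / 4 + Real.logb q (M / (2 * (√q - 1))))) ≤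
      towerBound q ν M u := by
  have hq0 : 0 < q := by linarith
  have hsqrt : 0 < √q - 1 := sub_pos.2 (Real.lt_sqrt_of_sq_lt (by linarith))
  set ustar := 2 / 3 * (1 + ν / 4 + Real.logb q (M / (2 * (√q - 1)))) with hustar
  set t := q ^ (ustar / 2)
  set b := (√q - 1) / q with hb
  have ht : 0 < t := Real.rpow_pos_of_pos hq0 _
  have hx : 0 < q ^ (u / 2) := Real.rpow_pos_of_pos hq0 _
  have hcube : t ^ 3 = q * q ^ (ν / 4) * (M / (2 * (√q - 1))) := by
    rw [← Real.rpow_mul_natCast hq0.le,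
      show ustar / 2 * (3 : ℕ) = 1 + ν / 4 + Real.logb q (M / (2 * (√q - 1))) by
        rw [hustar]; push_cast; ring,
      Real.rpow_add hq0, Real.rpow_add hq0, Real.rpow_one,
      Real.rpow_logb hq0 hq.ne' (by positivity)]
  have hcrit : M * q ^ (ν / 4) = b * (2 * t ^ 3) := by
    rw [hcube, hb]
    field_simp
  rw [towerBound_eq hq0, towerBound_eq hq0, hcrit, sub_le_sub_iff_right]
  calc b * (2 * t ^ 3) / t + b * t ^ 2 = b * (3 * t ^ 2) := by
        field_simp
        ring
    _ ≤ b * (2 * t ^ 3 / q ^ (u / 2) + (q ^ (u / 2)) ^ 2) := by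
        gcongr
        exact three_mul_sq_le ht.le hx
    _ = b * (2 * t ^ 3) / q ^ (u / 2) + b * (q ^ (u / 2)) ^ 2 := by ring

theorem towerBound_sq_natCast {s n v : ℕ} (hs : 0 < s) (hv : v ≤ n) (M : ℝ) :
    towerBound ((s : ℝ) ^ 2) (2 * n : ℕ) M v =
      M * s ^ (n - v) + (s - 1) / s ^ 2 * (s ^ v) ^ 2 - 1 := by
  have hs' : (0 : ℝ) < s := by exact_mod_cast hs
  have hpow (k : ℕ) : ((s : ℝ) ^ 2) ^ ((k : ℝ) / 2) = s ^ k := by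
    rw [← Real.rpow_natCast_mul hs'.le, Nat.cast_two, mul_div_cancel₀ _ two_ne_zero,
      Real.rpow_natCast]
  rw [towerBound_eq (by positivity), Real.sqrt_sq hs'.le, hpow,
    show ((2 * n : ℕ) : ℝ) / 4 = n / 2 by push_cast; ring, hpow, pow_sub₀ _ hs'.ne' hv]
  ring

open scoped Pointwise in
theorem exists_towerBound_le_ncard {s n : ℕ} (hs : 2 ≤ s) {I : Set ℤ}
    (hI : I ⊆ Set.Ioo (-(s : ℤ) ^ (2 * n + 1)) 0) :
    ∃ u : ℝ, towerBound ((s : ℝ) ^ 2) (2 * n : ℕ) I.ncard u ≤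
      ((I + HZ s (2 * n)) \ HZ s (2 * n)).ncard := by
  classical
  have hs0 : 0 < s := by omega
  have hsR : (2 : ℝ) ≤ s := by exact_mod_cast hs
  have hex : ∃ v, I ⊆ Set.Ioo (-(s : ℤ) ^ (2 * v + 1)) 0 := ⟨n, hI⟩
  have hvn : Nat.find hex ≤ n := Nat.find_le hI
  have hIv := Nat.find_spec hex
  refine ⟨Nat.find hex, ?_⟩
  rw [towerBound_sq_natCast hs0 hvn]
  rcases hv : Nat.find hex with - | v
  · rw [hv] at hIv
    have hle : (I.ncard * s ^ (n - 0) : ℝ) ≤ ((I + HZ s (2 * n)) \ HZ s (2 * n)).ncard := by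
      exact_mod_cast ncard_mul_pow_le hs0 n.zero_le hIv
    have hb : ((s : ℝ) - 1) / s ^ 2 ≤ 1 := by
      rw [div_le_one (by positivity)]
      nlinarith
    rw [pow_zero, one_pow, mul_one]
    linarith
  · rw [hv] at hIv hvn
    obtain ⟨a, haI, ha⟩ : ∃ a ∈ I, a ≤ -(s : ℤ) ^ (2 * v + 1) := by
      by_contra! hlt
      exact Nat.find_min hex (hv ▸ v.lt_succ_self) fun a ha => ⟨hlt a ha, (hIv ha).2⟩
    have hle := ncard_mul_pow_add_le hs hvn hIv haI ha
    have hle' : (I.ncard * s ^ (n - (v + 1)) + (s - 1) * s ^ (2 * v) : ℝ) ≤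
        ((I + HZ s (2 * n)) \ HZ s (2 * n)).ncard := by
      rw [← Nat.cast_pred hs0]
      exact_mod_cast hle
    have hpow : ((s : ℝ) - 1) / s ^ 2 * (s ^ (v + 1)) ^ 2 = (s - 1) * s ^ (2 * v) := by
      field_simp
      ring
    linarith

end TowerBound

/-- For `2 ≤ m ≤ μ < s^(ν+1)`, with `q = s^2` and
`u* = (2/3)(1 + ν/4 + log_q((m-1)/(2(√q - 1))))`, one has
`Z(H, μ, m) ≥ (m-1)·q^(ν/4 - u*/2) + q^(u* - 1/2)(1 - q^(-1/2)) - 1`. -/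
theorem stmt15 (s ν : ℕ) (hs : 2 ≤ s) (hν : Even ν) (hν0 : 0 < ν)
    (m μ : ℕ) (hm : 2 ≤ m) (hmμ : m ≤ μ) (hμ : μ < s ^ (ν + 1))
    (q : ℝ) (hq : q = (s : ℝ) ^ 2)
    (ustar : ℝ)
    (hustar : ustar = (2 / 3) * (1 + (ν : ℝ) / 4 +
      Real.log (((m : ℝ) - 1) / (2 * (Real.sqrt q - 1))) / Real.log q)) :
    ((m : ℝ) - 1) * q ^ ((ν : ℝ) / 4 - ustar / 2) +
        q ^ (ustar - 1 / 2) * (1 - q ^ (-(1 : ℝ) / 2)) - 1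
      ≤ (Zval s ν μ m : ℝ) := by
  obtain ⟨n, rfl⟩ := even_iff_exists_two_mul.1 hν
  have hsR : (2 : ℝ) ≤ s := by exact_mod_cast hs
  obtain ⟨I, hI, hcard, hZ⟩ := exists_Zval_eq s (ν := 2 * n) hmμ
  have hI' : I ⊆ Set.Ioo (-(s : ℤ) ^ (2 * n + 1)) 0 := fun a ha => by
    have ⟨hle, hneg⟩ := hI ha
    zify at hμ
    exact ⟨by linarith, by linarith⟩
  have hm' : (I.ncard : ℝ) = m - 1 := by rw [hcard, Nat.cast_pred (by omega)]
  have hmpos : (0 : ℝ) < m - 1 := sub_pos.2 (by exact_mod_cast hm)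
  obtain ⟨u, hu⟩ := exists_towerBound_le_ncard hs hI'
  rw [hm', ← hZ] at hu
  rw [Real.log_div_log] at hustar
  subst hq hustar
  exact (towerBound_minimizer_le (by nlinarith) hmpos _ u).trans hu
end
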